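/- For a t-set (X, ⪯) the following are equivalent: (1) X is a complete domain t-set (i.e., X is finitely complete and every directed subset has nonempty supremum); (2) X is a bounded complete domain t-set with la(X) ≠ ∅; (3) for every subset A of X, inf(A) ≠ ∅; (4) for every subset A of X, sup(A) ≠ ∅; (5) for every subset A of X which is finite or directed, sup(A) ≠ ∅. -/

import Mathlib

/-!
A set of upper bounds `ubs r A` is an upper cone exactly when it has a least element, i.e. when
`sups r A` is nonempty, so finite completeness is the existence of suprema of `∅` and of pairs, and
induction gives suprema of all finite sets. An arbitrary `A` has the same upper bounds as the
set `D` of all suprema of its finite subsets, which is directed; hence a supremum of `D`, which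
exists as soon as directed sets have suprema, is a supremum of `A`. Infima are suprema of
the set of lower bounds and dually. Finally a largest element of the space is an upper bound of
every pair, which removes the empty alternative in bounded completeness.

As `r` need not be reflexive, an element `a ∈ A` need not be a supremum of `{a}`; it is however below
any such supremum, which is what the argument needs.
-/

variable {X : Type*}

/-- Upper bounds of `A` w.r.t. the relation `r`. -/
def ubs (r : X → X → Prop) (A : Set X) : Set X := {x | ∀ y ∈ A, r y x}

/-- Lower bounds of `A` w.r.t. the relation `r`. -/
def lbs (r : X → X → Prop) (A : Set X) : Set X := {x | ∀ y ∈ A, r x y}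

/-- Least elements of `A`. -/
def les (r : X → X → Prop) (A : Set X) : Set X := {x | x ∈ A ∧ ∀ y ∈ A, r x y}

/-- Largest elements of `A`. -/
def las (r : X → X → Prop) (A : Set X) : Set X := {x | x ∈ A ∧ ∀ y ∈ A, r y x}

/-- The supremum set `sup(A) = le(ub(A))`. -/
def sups (r : X → X → Prop) (A : Set X) : Set X := les r (ubs r A)

/-- The infimum set `inf(A) = la(lb(A))`. -/
def infs (r : X → X → Prop) (A : Set X) : Set X := las r (lbs r A)

/-- Upper closure `↑(A)`. -/
def upCl (r : X → X → Prop) (A : Set X) : Set X := {x | ∃ y ∈ A, r y x}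

/-- `A` is an upper cone: `A = ↑x` for some `x ∈ A`. -/
def IsUpperCone (r : X → X → Prop) (A : Set X) : Prop := ∃ x ∈ A, A = upCl r {x}

/-- `A` is an upper set: `↑(A) ⊆ A`. -/
def IsUpperSetT (r : X → X → Prop) (A : Set X) : Prop := upCl r A ⊆ A

/-- `A` is directed. -/
def IsDirectedT (r : X → X → Prop) (A : Set X) : Prop :=
  A.Nonempty ∧ ∀ x ∈ A, ∀ y ∈ A, x ≠ y → ∃ z ∈ A, z ∈ ubs r {x, y}

/-- `(X, r)` is a domain t-set: every directed subset has nonempty supremum set. -/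
def IsDomainT (r : X → X → Prop) : Prop :=
  ∀ A : Set X, IsDirectedT r A → (sups r A).Nonempty

/-- Bounded complete t-set. -/
def BoundedCompleteT (r : X → X → Prop) : Prop :=
  IsUpperCone r (Set.univ : Set X) ∧
    ∀ x y : X, ubs r {x, y} = ∅ ∨ IsUpperCone r (ubs r {x, y})

/-- Finitely complete t-set. -/
def FinitelyCompleteT (r : X → X → Prop) : Prop :=
  IsUpperCone r (Set.univ : Set X) ∧ ∀ x y : X, IsUpperCone r (ubs r {x, y})

/-- `A` is finitary: there is a finite `F ⊆ A` with `A ⊆ ↑(F)`. -/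
def IsFinitaryT (r : X → X → Prop) (A : Set X) : Prop :=
  ∃ F : Set X, F ⊆ A ∧ F.Finite ∧ A ⊆ upCl r F

/-- Finitarily complete t-set. -/
def FinitarilyCompleteT (r : X → X → Prop) : Prop :=
  IsFinitaryT r (Set.univ : Set X) ∧ ∀ x y : X, IsFinitaryT r (ubs r {x, y})

/-- Strongly compact subset of a topological t-set. -/
def StronglyCompactT [TopologicalSpace X] (r : X → X → Prop) (A : Set X) : Prop :=
  ∀ O : Set X, IsOpen O → A ⊆ O → ∃ F : Set X, IsFinitaryT r F ∧ A ⊆ F ∧ F ⊆ O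

/-- Strongly compactly complete topological t-set. -/
def StronglyCompactlyCompleteT [TopologicalSpace X] (r : X → X → Prop) : Prop :=
  StronglyCompactT r (Set.univ : Set X) ∧ ∀ x y : X, StronglyCompactT r (ubs r {x, y})

/-- Compactly complete topological t-set. -/
def CompactlyCompleteT [TopologicalSpace X] (r : X → X → Prop) : Prop :=
  IsCompact (Set.univ : Set X) ∧ ∀ x y : X, IsCompact (ubs r {x, y})

lemma isUpperCone_ubs_iff {r : X → X → Prop} (htrans : Transitive r) (A : Set X) :
    IsUpperCone r (ubs r A) ↔ (sups r A).Nonempty := by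
  constructor
  · rintro ⟨x, hx, h⟩
    refine ⟨x, hx, fun y hy => ?_⟩
    rw [h] at hy
    simpa [upCl] using hy
  · rintro ⟨x, hx, h⟩
    refine ⟨x, hx, Set.ext fun y => ?_⟩
    simp only [upCl, Set.mem_singleton_iff, exists_eq_left, Set.mem_setOf_eq]
    exact ⟨fun hy => h y hy, fun hxy a ha => htrans (hx a ha) hxy⟩

lemma ubs_empty (r : X → X → Prop) : ubs r ∅ = Set.univ := by
  simp [ubs]

lemma finitelyCompleteT_iff {r : X → X → Prop} (htrans : Transitive r) :
    FinitelyCompleteT r ↔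
      (sups r (∅ : Set X)).Nonempty ∧ ∀ x y : X, (sups r {x, y}).Nonempty := by
  simp only [FinitelyCompleteT, ← isUpperCone_ubs_iff htrans, ubs_empty]

lemma sups_nonempty_of_finite {r : X → X → Prop} (htrans : Transitive r)
    (h0 : (sups r (∅ : Set X)).Nonempty) (h2 : ∀ x y : X, (sups r {x, y}).Nonempty)
    {A : Set X} (hA : A.Finite) : (sups r A).Nonempty := by
  induction A, hA using Set.Finite.induction_on with
  | empty => exact h0
  | @insert a F _ _ ih =>
    obtain ⟨s, hs, hs'⟩ := ih
    obtain ⟨u, hu, hu'⟩ := h2 a s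
    refine ⟨u, ?_, fun x hx => hu' x ?_⟩
    · rintro y (rfl | hy)
      · exact hu _ (by simp)
      · exact htrans (hs y hy) (hu s (by simp))
    · rintro y (rfl | rfl)
      · exact hx _ (by simp)
      · exact hs' x fun z hz => hx z (by simp [hz])

/-- A supremum of the directed set of suprema of finite subsets of `A` is a supremum of `A`. -/
lemma sups_nonempty_of_finite_of_directed {r : X → X → Prop} (htrans : Transitive r)
    (hfin : ∀ A : Set X, A.Finite → (sups r A).Nonempty) (hdir : IsDomainT r) (A : Set X) :
    (sups r A).Nonempty := by
  obtain ⟨d, hd, hd'⟩ := hdir {s | ∃ F : Set X, F.Finite ∧ F ⊆ A ∧ s ∈ sups r F} (by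
    constructor
    · obtain ⟨s, hs⟩ := hfin ∅ Set.finite_empty
      exact ⟨s, ∅, Set.finite_empty, Set.empty_subset A, hs⟩
    · rintro x ⟨F, hF, hFA, hx⟩ y ⟨G, hG, hGA, hy⟩ -
      obtain ⟨u, hu⟩ := hfin (F ∪ G) (hF.union hG)
      refine ⟨u, ⟨F ∪ G, hF.union hG, Set.union_subset hFA hGA, hu⟩, ?_⟩
      rintro z (rfl | rfl)
      · exact hx.2 u fun w hw => hu.1 w (Or.inl hw)
      · exact hy.2 u fun w hw => hu.1 w (Or.inr hw))
  refine ⟨d, fun a ha => ?_, fun x hx => hd' x ?_⟩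
  · obtain ⟨s, hs⟩ := hfin {a} (Set.finite_singleton a)
    exact htrans (hs.1 a rfl)
      (hd s ⟨{a}, Set.finite_singleton a, Set.singleton_subset_iff.2 ha, hs⟩)
  · rintro s ⟨F, -, hFA, hs⟩
    exact hs.2 x fun z hz => hx z (hFA hz)

/-- Characterizations of complete domain t-sets. -/
theorem completeDomain_tfae [Nonempty X] (r : X → X → Prop) (htrans : Transitive r) :
    List.TFAE
      [FinitelyCompleteT r ∧ IsDomainT r,
       (BoundedCompleteT r ∧ IsDomainT r) ∧ (las r (Set.univ : Set X)).Nonempty,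
       ∀ A : Set X, (infs r A).Nonempty,
       ∀ A : Set X, (sups r A).Nonempty,
       ∀ A : Set X, (A.Finite ∨ IsDirectedT r A) → (sups r A).Nonempty] := by
  tfae_have 2 → 1 := by
    rintro ⟨⟨⟨h0, h2⟩, hd⟩, t, -, ht⟩
    refine ⟨⟨h0, fun x y => (h2 x y).resolve_left fun he => ?_⟩, hd⟩
    have : t ∈ ubs r {x, y} := fun z _ => ht z trivial
    simp [he] at this
  tfae_have 1 → 5 := by
    rintro ⟨hc, hd⟩ A (hA | hA)
    · obtain ⟨h0, h2⟩ := (finitelyCompleteT_iff htrans).1 hc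
      exact sups_nonempty_of_finite htrans h0 h2 hA
    · exact hd A hA
  tfae_have 5 → 4 := fun h =>
    sups_nonempty_of_finite_of_directed htrans (fun A hA => h A (Or.inl hA))
      fun A hA => h A (Or.inr hA)
  tfae_have 4 → 2 := by
    intro h
    obtain ⟨hX, h2⟩ := (finitelyCompleteT_iff htrans).2 ⟨h ∅, fun x y => h {x, y}⟩
    obtain ⟨t, ht, -⟩ := h Set.univ
    exact ⟨⟨⟨hX, fun x y => Or.inr (h2 x y)⟩, fun A _ => h A⟩, t, trivial, ht⟩
  tfae_have 4 → 3 := by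
    intro h A
    obtain ⟨s, hs, hs'⟩ := h (lbs r A)
    exact ⟨s, fun a ha => hs' a fun y hy => hy a ha, hs⟩
  tfae_have 3 → 4 := by
    intro h A
    obtain ⟨s, hs, hs'⟩ := h (ubs r A)
    exact ⟨s, fun a ha => hs' a fun y hy => hy a ha, hs⟩
  tfae_finish
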